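/- Let X be a nonempty closed subset of ℝⁿ and H a finitely constrained hypothesis on X. Then H is properly constrained if and only if there exists P ∈ H whose support equals X. -/

import Mathlib

open MeasureTheory Set ENNReal

noncomputable section

/-- The (topological) support of a Borel measure: the set of points all of whose open
neighbourhoods have positive measure. -/
def msupport {α : Type*} [TopologicalSpace α] [MeasurableSpace α]
    (P : Measure α) : Set α :=
  {x | ∀ U : Set α, IsOpen U → x ∈ U → 0 < P U}

variable {α : Type*} [TopologicalSpace α] [MeasurableSpace α] {X : Set α} {m : ℕ}

/-- A hypothesis on `X`: a nonempty set of Borel probability measures (on `X`,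
identified with the Borel probability measures supported in `X`). -/
def IsHypothesis (H : Set (Measure X)) : Prop :=
  H.Nonempty ∧ ∀ P ∈ H, IsProbabilityMeasure P

/-- An e-variable with respect to `H`: a Borel measurable nonnegative function whose
expectation is at most one under every `P ∈ H`. -/
def IsEVar (H : Set (Measure X)) (E : X → ℝ) : Prop :=
  Measurable E ∧ (∀ x, 0 ≤ E x) ∧ ∀ P ∈ H, ∫⁻ x, ENNReal.ofReal (E x) ∂P ≤ 1

/-- `f` majorises `g` if `f(x) ≥ g(x)` for every `x ∈ X`. -/
def Majorises (f g : X → ℝ) : Prop := ∀ x, g x ≤ f x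

/-- A maximal e-variable: an e-variable with no strict majoriser among e-variables. -/
def IsMaximalEVar (H : Set (Measure X)) (E : X → ℝ) : Prop :=
  IsEVar H E ∧ ¬ ∃ E', IsEVar H E' ∧ Majorises E' E ∧ E' ≠ E

/-- A majorising e-class: an e-class such that every e-variable is majorised by
one of its elements. -/
def IsMajorisingClass (H : Set (Measure X)) (C : Set (X → ℝ)) : Prop :=
  (∀ E ∈ C, IsEVar H E) ∧ ∀ E, IsEVar H E → ∃ E' ∈ C, Majorises E' E

/-- The optimal e-class: a majorising e-class contained in every majorising e-class. -/
def IsOptimalClass (H : Set (Measure X)) (C : Set (X → ℝ)) : Prop :=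
  IsMajorisingClass H C ∧ ∀ C', IsMajorisingClass H C' → C ⊆ C'

/-- `P ∈ P_Φ`: the expectation of the ℓ¹-norm of `Φ` under `P` is finite. -/
def MemPPhi (P : Measure X) (Φ : X → Fin m → ℝ) : Prop :=
  ∫⁻ x, ENNReal.ofReal (∑ i, |Φ x i|) ∂P < ⊤

/-- `Φ` is a constraint for `H`: `Φ` is continuous and `H` is exactly the set of Borel
probability measures `P ∈ P_Φ` with `⟨P, Φ⟩ = 0`. -/
def IsConstraint (H : Set (Measure X)) (Φ : X → Fin m → ℝ) : Prop :=
  Continuous Φ ∧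
    H = {P : Measure X | IsProbabilityMeasure P ∧ MemPPhi P Φ ∧ ∫ x, Φ x ∂P = 0}

/-- A proper constraint: a constraint such that `0` lies in the relative interior
of the convex hull of the image of `Φ`. -/
def IsProperConstraint (H : Set (Measure X)) (Φ : X → Fin m → ℝ) : Prop :=
  IsConstraint H Φ ∧
    (0 : Fin m → ℝ) ∈ intrinsicInterior ℝ (convexHull ℝ (Set.range Φ))

/-- A minimal constraint: a constraint such that `0` lies in the interior
of the convex hull of the image of `Φ`. -/
def IsMinimalConstraint (H : Set (Measure X)) (Φ : X → Fin m → ℝ) : Prop :=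
  IsConstraint H Φ ∧
    (0 : Fin m → ℝ) ∈ interior (convexHull ℝ (Set.range Φ))

/-- A finitely constrained hypothesis: one admitting a constraint. -/
def FinitelyConstrained (H : Set (Measure X)) : Prop :=
  ∃ (m : ℕ) (Φ : X → Fin m → ℝ), IsConstraint H Φ

/-- A properly constrained hypothesis: one admitting a proper constraint. -/
def ProperlyConstrained (H : Set (Measure X)) : Prop :=
  ∃ (m : ℕ) (Φ : X → Fin m → ℝ), IsProperConstraint H Φ

/-- `Λ_{Φ|S} = {λ ∈ ℝᵐ : sup_{x ∈ S} λ·Φ(x) ≤ 1}`. -/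
def LambdaSet (Φ : X → Fin m → ℝ) (S : Set X) : Set (Fin m → ℝ) :=
  {l | ∀ x ∈ S, ∑ i, l i * Φ x i ≤ 1}

/-- The dual e-class `E_H^∨ = {1 - λ·Φ : λ ∈ Λ_Φ}`. -/
def dualClass (Φ : X → Fin m → ℝ) : Set (X → ℝ) :=
  {E | ∃ l ∈ LambdaSet Φ Set.univ, E = fun x => 1 - ∑ i, l i * Φ x i}

/-- A matching set for `H`: a closed set that is exactly the support of some `P ∈ H`. -/
def IsMatchingSet (H : Set (Measure X)) (S : Set X) : Prop :=
  IsClosed S ∧ ∃ P ∈ H, msupport P = S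

end

section helpers

open Filter Topology

theorem memPPhi_iff {α : Type*} [TopologicalSpace α] [MeasurableSpace α] {X : Set α} {m : ℕ}
    [OpensMeasurableSpace X] [SecondCountableTopology X] (P : Measure X)
    (Φ : X → Fin m → ℝ) (hΦ : Continuous Φ) : MemPPhi P Φ ↔ Integrable Φ P := by
  have hc : ∀ i, Continuous fun x => Φ x i := fun i => (continuous_apply i).comp hΦ
  unfold MemPPhi
  constructor
  · intro h
    refine ⟨hΦ.aestronglyMeasurable, ?_⟩
    refine lt_of_le_of_lt (lintegral_mono fun x => ?_) h
    rw [← ofReal_norm_eq_enorm]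
    refine ENNReal.ofReal_le_ofReal ?_
    refine (pi_norm_le_iff_of_nonneg (Finset.sum_nonneg fun i _ => abs_nonneg _)).2 fun i => ?_
    exact Finset.single_le_sum (f := fun i => |Φ x i|) (fun i _ => abs_nonneg _) (Finset.mem_univ i)
  · intro h
    have h2 : Integrable (fun x => ∑ i, |Φ x i|) P :=
      integrable_finset_sum _ fun i _ => (h.eval i).abs
    exact (hasFiniteIntegral_iff_ofReal
      (Eventually.of_forall fun x => Finset.sum_nonneg fun i _ => abs_nonneg _)).1 h2.2

variable {Y : Type*} [TopologicalSpace Y] [MeasurableSpace Y]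
  [OpensMeasurableSpace Y] [SecondCountableTopology Y]
  {E : Type*} [NormedAddCommGroup E] [NormedSpace ℝ E] [FiniteDimensional ℝ E]

theorem exists_full [Nonempty Y] (Φ : Y → E) (hΦ : Continuous Φ) :
    ∃ P : Measure Y, IsProbabilityMeasure P ∧ Integrable Φ P ∧ msupport P = univ := by
  let d := TopologicalSpace.denseSeq Y
  let a : ℕ → ℝ≥0∞ := fun k => 2⁻¹ ^ (k + 1) / (1 + ‖Φ (d k)‖ₑ)
  have ha0 : ∀ k, a k ≠ 0 := fun k => by
    simp [a, ENNReal.div_eq_zero_iff]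
  have ha1 : ∀ k, a k * (1 + ‖Φ (d k)‖ₑ) = 2⁻¹ ^ (k + 1) := fun k => by
    refine ENNReal.div_mul_cancel ?_ ?_ <;> simp
  have hsum : ∑' k : ℕ, (2⁻¹ : ℝ≥0∞) ^ (k + 1) = 1 := by
    rw [ENNReal.tsum_geometric_add_one, ENNReal.one_sub_inv_two, inv_inv]
    exact ENNReal.inv_mul_cancel (by simp) (by simp)
  let ν : Measure Y := Measure.sum fun k => a k • Measure.dirac (d k)
  have hνU : ∀ U, IsOpen U → U.Nonempty → 0 < ν U := by
    intro U hU hne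
    obtain ⟨k, hk⟩ := (TopologicalSpace.denseRange_denseSeq Y).exists_mem_open hU hne
    have h1 : a k ≤ ν U := by
      rw [Measure.sum_apply _ hU.measurableSet]
      refine le_trans ?_ (ENNReal.le_tsum k)
      have hk' : d k ∈ U := hk
      simp [Measure.dirac_apply' _ hU.measurableSet, hk']
    exact lt_of_lt_of_le (pos_iff_ne_zero.2 (ha0 k)) h1
  have hint : ∫⁻ x, (1 + ‖Φ x‖ₑ) ∂ν ≤ 1 := by
    have hm : Measurable fun x => (1 + ‖Φ x‖ₑ) :=
      (continuous_const.add hΦ.enorm).measurable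
    rw [lintegral_sum_measure]
    simp_rw [lintegral_smul_measure, lintegral_dirac' _ hm, smul_eq_mul, ha1]
    exact hsum.le
  have hfin : ν univ ≠ ⊤ := by
    refine ne_top_of_le_ne_top ENNReal.one_ne_top (le_trans ?_ hint)
    rw [← lintegral_one]
    exact lintegral_mono fun x => le_self_add
  have hI : Integrable Φ ν := by
    refine ⟨hΦ.aestronglyMeasurable, ?_⟩
    refine lt_of_le_of_lt ?_ ENNReal.one_lt_top
    refine le_trans (lintegral_mono fun x => ?_) hint
    exact le_add_self
  have hpos : ν univ ≠ 0 := (hνU univ isOpen_univ univ_nonempty).ne'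
  refine ⟨(ν univ)⁻¹ • ν, ⟨?_⟩, hI.smul_measure (ENNReal.inv_ne_top.2 hpos), ?_⟩
  · simp [ENNReal.inv_mul_cancel hpos hfin]
  · refine eq_univ_of_forall fun x U hU hx => ?_
    simp only [Measure.smul_apply, smul_eq_mul]
    exact ENNReal.mul_pos (ENNReal.inv_ne_zero.2 hfin) (hνU U hU ⟨x, hx⟩).ne'

theorem comb (Φ : Y → E) {P Q : Measure Y} [IsProbabilityMeasure P] [IsProbabilityMeasure Q]
    (hP : Integrable Φ P) (hQ : Integrable Φ Q) {a b : ℝ} (ha : 0 ≤ a) (hb : 0 ≤ b)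
    (hab : a + b = 1) :
    IsProbabilityMeasure (ENNReal.ofReal a • P + ENNReal.ofReal b • Q) ∧
    Integrable Φ (ENNReal.ofReal a • P + ENNReal.ofReal b • Q) ∧
    ∫ x, Φ x ∂(ENNReal.ofReal a • P + ENNReal.ofReal b • Q)
      = a • ∫ x, Φ x ∂P + b • ∫ x, Φ x ∂Q := by
  have h1 := hP.smul_measure (c := ENNReal.ofReal a) ENNReal.ofReal_ne_top
  have h2 := hQ.smul_measure (c := ENNReal.ofReal b) ENNReal.ofReal_ne_top
  refine ⟨⟨?_⟩, h1.add_measure h2, ?_⟩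
  · simp [← ENNReal.ofReal_add ha hb, hab]
  · rw [integral_add_measure h1 h2, integral_smul_measure, integral_smul_measure,
      ENNReal.toReal_ofReal ha, ENNReal.toReal_ofReal hb]

theorem hull_sub (Φ : Y → E) (hΦ : Continuous Φ) {y : E} (hy : y ∈ convexHull ℝ (range Φ)) :
    ∃ Q : Measure Y, IsProbabilityMeasure Q ∧ Integrable Φ Q ∧ ∫ x, Φ x ∂Q = y := by
  have : convexHull ℝ (range Φ) ⊆
      {y | ∃ Q : Measure Y, IsProbabilityMeasure Q ∧ Integrable Φ Q ∧ ∫ x, Φ x ∂Q = y} := by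
    refine convexHull_min ?_ ?_
    · rintro _ ⟨x, rfl⟩
      refine ⟨Measure.dirac x, inferInstance, ?_, ?_⟩
      · refine ⟨hΦ.aestronglyMeasurable, ?_⟩
        unfold HasFiniteIntegral
        rw [lintegral_dirac' _ hΦ.enorm.measurable]
        exact enorm_lt_top
      · exact integral_dirac' _ _ hΦ.stronglyMeasurable
    · rintro _ ⟨P, hP, hPi, rfl⟩ _ ⟨Q, hQ, hQi, rfl⟩ a b ha hb hab
      obtain ⟨h1, h2, h3⟩ := comb Φ hPi hQi ha hb hab
      exact ⟨_, h1, h2, h3⟩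
  exact this hy

theorem integral_mem_affineSpan (Φ : Y → E) {P : Measure Y} [IsProbabilityMeasure P]
    (hP : Integrable Φ P) : ∫ x, Φ x ∂P ∈ affineSpan ℝ (range Φ) := by
  have hcl : IsClosed (affineSpan ℝ (range Φ) : Set E) :=
    AffineSubspace.closed_of_finiteDimensional _
  exact (AffineSubspace.convex (affineSpan ℝ (range Φ))).integral_mem hcl
    (Eventually.of_forall fun x => subset_affineSpan ℝ _ (mem_range_self x)) hP

theorem forward [Nonempty Y] (Φ : Y → E) (hΦ : Continuous Φ)
    (h0 : (0 : E) ∈ intrinsicInterior ℝ (convexHull ℝ (range Φ))) :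
    ∃ P : Measure Y, IsProbabilityMeasure P ∧ Integrable Φ P ∧ ∫ x, Φ x ∂P = 0 ∧
      msupport P = univ := by
  obtain ⟨P, hP, hPi, hPs⟩ := exists_full Φ hΦ
  set v := ∫ x, Φ x ∂P with hv
  have hvm : v ∈ affineSpan ℝ (convexHull ℝ (range Φ)) := by
    rw [affineSpan_convexHull]; exact integral_mem_affineSpan Φ hPi
  obtain ⟨y, hy, hy0⟩ := mem_intrinsicInterior.1 h0
  have h0m : (0 : E) ∈ affineSpan ℝ (convexHull ℝ (range Φ)) := hy0 ▸ y.2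
  have hline : ∀ t : ℝ, t • v ∈ affineSpan ℝ (convexHull ℝ (range Φ)) := fun t => by
    simpa [AffineMap.lineMap_apply] using AffineMap.lineMap_mem t h0m hvm
  let f : ℝ → affineSpan ℝ (convexHull ℝ (range Φ)) := fun t => ⟨(-t) • v, hline _⟩
  have hf : Continuous f := by
    refine Continuous.subtype_mk ?_ _
    fun_prop
  have hf0 : f 0 = y := Subtype.ext (by simp [f, hy0])
  have hev : ∀ᶠ t in 𝓝 (0 : ℝ), (f t : E) ∈ convexHull ℝ (range Φ) := by
    have := hf.continuousAt (x := 0)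
    rw [ContinuousAt, hf0] at this
    exact this (mem_interior_iff_mem_nhds.1 hy)
  have hev2 : ∀ᶠ t in 𝓝[>] (0 : ℝ), (f t : E) ∈ convexHull ℝ (range Φ) :=
    hev.filter_mono nhdsWithin_le_nhds
  obtain ⟨t, ht, htpos⟩ := (hev2.and self_mem_nhdsWithin).exists
  have htpos : 0 < t := htpos
  obtain ⟨Q, hQ, hQi, hQv⟩ := hull_sub Φ hΦ ht
  have hQv : ∫ x, Φ x ∂Q = (-t) • v := hQv
  obtain ⟨h1, h2, h3⟩ := comb Φ hPi hQi (a := t / (1 + t)) (b := 1 / (1 + t))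
    (by positivity) (by positivity) (by field_simp; ring)
  refine ⟨_, h1, h2, ?_, ?_⟩
  · rw [h3, hQv, ← hv, smul_smul, ← add_smul]
    have : t / (1 + t) + 1 / (1 + t) * -t = 0 := by ring
    rw [this, zero_smul]
  · refine eq_univ_of_forall fun x U hU hx => ?_
    have hx' : x ∈ msupport P := hPs ▸ mem_univ x
    have := hx' U hU hx
    have hc : 0 < ENNReal.ofReal (t / (1 + t)) := ENNReal.ofReal_pos.2 (by positivity)
    simp only [Measure.add_apply, Measure.smul_apply, smul_eq_mul]
    exact lt_of_lt_of_le (ENNReal.mul_pos hc.ne' this.ne') le_self_add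

theorem backward_top [Nonempty Y] (Φ : Y → E) (hΦ : Continuous Φ)
    (hspan : Submodule.span ℝ (range Φ) = ⊤)
    {P : Measure Y} [IsProbabilityMeasure P] (hPi : Integrable Φ P)
    (hP0 : ∫ x, Φ x ∂P = 0) (hPs : msupport P = univ) :
    (0 : E) ∈ interior (convexHull ℝ (range Φ)) := by
  have h0 : (0 : E) ∈ affineSpan ℝ (range Φ) := hP0 ▸ integral_mem_affineSpan Φ hPi
  have haff : affineSpan ℝ (range Φ) = ⊤ := by
    rw [← affineSpan_insert_eq_affineSpan ℝ h0]
    apply SetLike.coe_injective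
    rw [affineSpan_insert_zero, hspan]
    simp
  have hcv := convex_convexHull ℝ (range Φ)
  have hne : (interior (convexHull ℝ (range Φ))).Nonempty := by
    rw [hcv.interior_nonempty_iff_affineSpan_eq_top, affineSpan_convexHull, haff]
  by_contra hn
  obtain ⟨f, hf⟩ := geometric_hahn_banach_open_point hcv.interior isOpen_interior hn
  rw [map_zero] at hf
  have hle : ∀ x, f (Φ x) ≤ 0 := by
    intro x
    have hx : Φ x ∈ closure (interior (convexHull ℝ (range Φ))) := by
      rw [hcv.closure_interior_eq_closure_of_nonempty_interior hne]
      exact subset_closure (subset_convexHull ℝ _ (mem_range_self x))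
    have hcl : IsClosed {y | f y ≤ 0} := isClosed_le f.continuous continuous_const
    exact closure_minimal (fun y hy => (hf y hy).le) hcl hx
  have hint : ∫ x, -f (Φ x) ∂P = 0 := by
    rw [integral_neg, f.integral_comp_comm hPi, hP0, map_zero, neg_zero]
  have hae := (integral_eq_zero_iff_of_nonneg (f := fun x => -f (Φ x))
    (fun x => neg_nonneg.2 (hle x)) (f.integrable_comp hPi).neg).1 hint
  have hzero : ∀ x, f (Φ x) = 0 := by
    intro x
    by_contra hx
    have hx' : x ∈ msupport P := hPs ▸ mem_univ x
    have hop : IsOpen {x | f (Φ x) ≠ 0} :=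
      isOpen_ne_fun (f.continuous.comp hΦ) continuous_const
    have := hx' _ hop hx
    refine this.ne' ?_
    have h2 : ∀ᵐ x ∂P, f (Φ x) = 0 := by
      filter_upwards [hae] with x hx
      simpa using hx
    exact h2
  obtain ⟨y, hy⟩ := hne
  have hy1 : y ∈ Submodule.span ℝ (range Φ) := hspan ▸ Submodule.mem_top
  have hsub : Submodule.span ℝ (range Φ) ≤ LinearMap.ker (f : E →ₗ[ℝ] ℝ) := by
    rw [Submodule.span_le]
    rintro _ ⟨x, rfl⟩
    exact hzero x
  have := hf y hy
  have h3 : f y = 0 := hsub hy1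
  linarith

theorem backward [Nonempty Y] (Φ : Y → E) (hΦ : Continuous Φ)
    {P : Measure Y} [IsProbabilityMeasure P] (hPi : Integrable Φ P)
    (hP0 : ∫ x, Φ x ∂P = 0) (hPs : msupport P = univ) :
    (0 : E) ∈ intrinsicInterior ℝ (convexHull ℝ (range Φ)) := by
  let V := Submodule.span ℝ (range Φ)
  let Ψ : Y → V := fun x => ⟨Φ x, Submodule.subset_span (mem_range_self x)⟩
  have hΨ : Continuous Ψ := hΦ.subtype_mk _
  have himg : V.subtype '' range Ψ = range Φ := by
    rw [← range_comp]; rfl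
  have hspan : Submodule.span ℝ (range Ψ) = ⊤ := by
    apply Submodule.map_injective_of_injective V.injective_subtype
    rw [Submodule.map_span, himg, Submodule.map_subtype_top]
  have hΨi : Integrable Ψ P := by
    refine ⟨hΨ.aestronglyMeasurable, hPi.2⟩
  have hΨ0 : ∫ x, Ψ x ∂P = 0 := by
    apply V.injective_subtype
    have := V.subtypeL.integral_comp_comm hΨi
    rw [map_zero]
    exact this.symm.trans hP0
  have h := interior_subset_intrinsicInterior (𝕜 := ℝ) (backward_top Ψ hΨ hspan hΨi hΨ0 hPs)
  have h2 := V.subtypeₗᵢ.toAffineIsometry.intrinsicInterior_image (convexHull ℝ (range Ψ))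
  have h3 : V.subtypeₗᵢ.toAffineIsometry '' (convexHull ℝ (range Ψ)) = convexHull ℝ (range Φ) := by
    rw [← himg]
    exact V.subtype.image_convexHull _
  rw [← h3, h2]
  exact ⟨0, h, by simp⟩

end helpers

/-- a finitely constrained hypothesis is properly constrained iff some
`P ∈ H` has full support (support equal to `X`). -/
theorem statement9 {n : ℕ} {X : Set (EuclideanSpace ℝ (Fin n))}
    (hXc : IsClosed X) (hXne : X.Nonempty)
    (H : Set (Measure X)) (hHne : H.Nonempty) (hfc : FinitelyConstrained H) :
    ProperlyConstrained H ↔ ∃ P ∈ H, msupport P = (Set.univ : Set X) := by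
  haveI : Nonempty X := hXne.to_subtype
  constructor
  · rintro ⟨m, Φ, ⟨hc, rfl⟩, h0⟩
    obtain ⟨P, h1, h2, h3, h4⟩ := forward Φ hc h0
    exact ⟨P, ⟨h1, (memPPhi_iff P Φ hc).2 h2, h3⟩, h4⟩
  · rintro ⟨P, hP, hPs⟩
    obtain ⟨m, Φ, hc, rfl⟩ := hfc
    obtain ⟨h1, h2, h3⟩ := hP
    exact ⟨m, Φ, ⟨hc, rfl⟩, backward Φ hc ((memPPhi_iff P Φ hc).1 h2) h3 hPs⟩
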